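/- Let n ∈ [1, +∞) and define b_n : [−1,1] × [0,+∞) → [0,+∞) by b_n(c, ξ) := (1 − c²)(1 + 2cξ + ξ²)^n / (1 + ξ^{2n}). Then sup_{c ∈ [−1,1], ξ ∈ [0,+∞)} b_n(c, ξ) = b_n(n/(n+2), 1) = 2^{2n+1}(n+1)^{n+1} / (n+2)^{n+2}. -/

import Mathlib

noncomputable section

/-!
Replacing `c` by `d = max c 0` only increases `1 - c ^ 2` and `1 + 2 * c * ξ + ξ ^ 2`. For
`d ≥ 0`, the inequality `2 * ξ ≤ 1 + ξ ^ 2` gives `1 + 2 * d * ξ + ξ ^ 2 ≤ (1 + d) * (1 + ξ ^ 2)`,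
and convexity of `x ↦ x ^ n` gives `(1 + ξ ^ 2) ^ n ≤ 2 ^ (n - 1) * (1 + ξ ^ (2 * n))`. Hence the
quotient is at most `2 ^ (n - 1) * (1 - d) * (1 + d) ^ (n + 1)`, which weighted AM-GM
(`one_sub_mul_rpow_le`) bounds by the claimed constant. All steps are equalities at
`ξ = 1`, `c = n / (n + 2)`.
-/

/-- Weighted AM-GM for `(n + 1) * (1 - d)` and `1 + d` with weights `1 / (n + 2)` and
`(n + 1) / (n + 2)`, raised to the power `n + 2`. -/
lemma one_sub_mul_rpow_le (n d : ℝ) (hn : 1 ≤ n) (hd0 : 0 ≤ d) (hd1 : d ≤ 1) :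
    (n + 1) * (1 - d) * (1 + d) ^ (n + 1) ≤ (2 * (n + 1) / (n + 2)) ^ (n + 2) := by
  have hn2 : 0 < n + 2 := by linarith
  have hp : 0 ≤ (n + 1) * (1 - d) := mul_nonneg (by linarith) (by linarith)
  have hq : 0 ≤ 1 + d := by linarith
  have h := Real.geom_mean_le_arith_mean2_weighted (w₁ := 1 / (n + 2)) (w₂ := (n + 1) / (n + 2))
    (by positivity) (div_nonneg (by linarith) hn2.le) hp hq (by field_simp; ring)
  have h' := Real.rpow_le_rpow (by positivity) h hn2.le
  rw [Real.mul_rpow (by positivity) (by positivity), ← Real.rpow_mul hp, ← Real.rpow_mul hq,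
    div_mul_cancel₀ _ hn2.ne', div_mul_cancel₀ _ hn2.ne', Real.rpow_one] at h'
  refine h'.trans_eq ?_
  congr 1
  field_simp
  ring

lemma one_add_sq_rpow_le (n ξ : ℝ) (hn : 1 ≤ n) (hξ : 0 ≤ ξ) :
    (1 + ξ ^ 2) ^ n ≤ 2 ^ (n - 1) * (1 + ξ ^ (2 * n)) := by
  lift ξ to NNReal using hξ
  have h : ((1 : ℝ) + (ξ : ℝ) ^ 2) ^ n ≤ 2 ^ (n - 1) * (1 ^ n + ((ξ : ℝ) ^ 2) ^ n) := by
    have h := NNReal.coe_le_coe.2 (NNReal.rpow_add_le_mul_rpow_add_rpow 1 (ξ ^ (2 : ℕ)) hn)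
    push_cast at h
    exact h
  rwa [Real.one_rpow, ← Real.rpow_natCast_mul ξ.coe_nonneg, Nat.cast_ofNat] at h

lemma const_eq (n : ℝ) (hn : 1 ≤ n) :
    (2 : ℝ) ^ (2 * n + 1) * (n + 1) ^ (n + 1) / (n + 2) ^ (n + 2) =
      2 ^ (n - 1) * ((2 * (n + 1) / (n + 2)) ^ (n + 2) / (n + 1)) := by
  have h1 : 0 < n + 1 := by linarith
  have h2 : 0 < n + 2 := by linarith
  have e1 : (n + 1) ^ (n + 2) = (n + 1) ^ (n + 1) * (n + 1) := by
    rw [← Real.rpow_add_one h1.ne']; congr 1; ring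
  have e2 : (2 : ℝ) ^ (2 * n + 1) = 2 ^ (n - 1) * 2 ^ (n + 2) := by
    rw [← Real.rpow_add two_pos]; congr 1; ring
  rw [Real.div_rpow (by positivity) h2.le, Real.mul_rpow two_pos.le h1.le, e1, e2]
  field_simp

/-- For `n ∈ [1, +∞)` and `b_n(c, ξ) = (1 − c²)(1 + 2cξ + ξ²)^n / (1 + ξ^{2n})` on
`[−1,1] × [0,+∞)`, the supremum of `b_n` is attained at `(n/(n+2), 1)` and equals
`2^{2n+1}(n+1)^{n+1}/(n+2)^{n+2}`. -/
theorem stmt6 (n : ℝ) (hn : 1 ≤ n) :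
    (∀ c ∈ Set.Icc (-1 : ℝ) 1, ∀ ξ ∈ Set.Ici (0 : ℝ),
      (1 - c ^ 2) * (1 + 2 * c * ξ + ξ ^ 2) ^ n / (1 + ξ ^ (2 * n)) ≤
        2 ^ (2 * n + 1) * (n + 1) ^ (n + 1) / (n + 2) ^ (n + 2)) ∧
    (1 - (n / (n + 2)) ^ 2) * (1 + 2 * (n / (n + 2)) * 1 + (1 : ℝ) ^ 2) ^ n /
        (1 + (1 : ℝ) ^ (2 * n)) =
      2 ^ (2 * n + 1) * (n + 1) ^ (n + 1) / (n + 2) ^ (n + 2) := by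
  have h1 : 0 < n + 1 := by linarith
  have h2 : 0 < n + 2 := by linarith
  constructor
  · rintro c ⟨hc0, hc1⟩ ξ hξ
    have hξ : 0 ≤ ξ := hξ
    have hpos : 0 < 1 + ξ ^ (2 * n) := by positivity
    obtain ⟨d, hd0, hd1, hcd, hsq⟩ : ∃ d : ℝ, 0 ≤ d ∧ d ≤ 1 ∧ c ≤ d ∧ d ^ 2 ≤ c ^ 2 := by
      rcases le_total 0 c with h | h
      · exact ⟨c, h, hc1, le_rfl, le_rfl⟩
      · exact ⟨0, le_rfl, zero_le_one, h, by nlinarith⟩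
    have hbase : 0 ≤ 1 + 2 * c * ξ + ξ ^ 2 := by nlinarith [sq_nonneg (1 - ξ)]
    have hbase' : 1 + 2 * c * ξ + ξ ^ 2 ≤ (1 + d) * (1 + ξ ^ 2) := by
      nlinarith [mul_le_mul_of_nonneg_right hcd hξ, mul_nonneg hd0 (sq_nonneg (1 - ξ))]
    have hq : 0 < 1 + d := by linarith
    have hd : 0 ≤ 1 - d ^ 2 := by nlinarith
    rw [div_le_iff₀ hpos, const_eq n hn]
    calc (1 - c ^ 2) * (1 + 2 * c * ξ + ξ ^ 2) ^ n
        ≤ (1 - d ^ 2) * ((1 + d) * (1 + ξ ^ 2)) ^ n := by gcongr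
      _ = (1 - d ^ 2) * ((1 + d) ^ n * (1 + ξ ^ 2) ^ n) := by
          rw [Real.mul_rpow hq.le (by positivity)]
      _ ≤ (1 - d ^ 2) * ((1 + d) ^ n * (2 ^ (n - 1) * (1 + ξ ^ (2 * n)))) := by
          gcongr
          exact one_add_sq_rpow_le n ξ hn hξ
      _ = 2 ^ (n - 1) * ((n + 1) * (1 - d) * (1 + d) ^ (n + 1) / (n + 1)) *
            (1 + ξ ^ (2 * n)) := by
          rw [Real.rpow_add_one hq.ne']
          field_simp
          ring
      _ ≤ _ := by
          gcongr
          exact one_sub_mul_rpow_le n d hn hd0 hd1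
  · have e0 : 1 + 2 * (n / (n + 2)) * 1 + (1 : ℝ) ^ 2 = 2 ^ (2 : ℝ) * (n + 1) / (n + 2) := by
      rw [Real.rpow_two]
      field_simp
      ring
    have e2 : (n + 2) ^ (n + 2) = (n + 2) ^ n * (n + 2) ^ 2 := by
      rw [Real.rpow_add h2, Real.rpow_two]
    rw [e0, Real.one_rpow, Real.div_rpow (by positivity) h2.le, Real.mul_rpow (by positivity) h1.le,
      ← Real.rpow_mul two_pos.le, Real.rpow_add_one two_ne_zero, Real.rpow_add_one h1.ne', e2]
    field_simp
    ring
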